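/- For every integer N > 1 and every integer l with 1 ≤ l ≤ N − 1, there exists λ ∈ (0, 1) such that every solution of the cycloid equation (∗) with parameter λ is 2πN-periodic, and every solution that is not identically zero has exactly 2l distinct zeros in [0, 2πN). (These λ are double eigenvalues of the 2πN-periodic problem, whose eigenfunctions are curvature radii of 𝒫-epicycloids closing after N turns with 2l ordinary cusps.) -/

import Mathlib

open Real MeasureTheory

noncomputable section

/-- Determinant of two plane vectors: `[a, b] = a₁b₂ − a₂b₁`. -/
def det2 (a b : ℝ × ℝ) : ℝ := a.1 * b.2 - a.2 * b.1

/-- The dual parameterization `q(θ) = p′(θ)/[p(θ), p′(θ)]`. -/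
def dualQ (p : ℝ → ℝ × ℝ) : ℝ → ℝ × ℝ :=
  fun θ => (det2 (p θ) (deriv p θ))⁻¹ • deriv p θ

/-- `p` is a smooth, symmetric, quadratically convex parameterization of the
unit circle of a normed plane, by the angle its tangent makes with a fixed direction. -/
def IsUnitCircle (p : ℝ → ℝ × ℝ) : Prop :=
  ContDiff ℝ (⊤ : ℕ∞) p ∧ (∀ θ, p (θ + π) = -p θ) ∧
  (∀ θ, 0 < det2 (p θ) (deriv p θ)) ∧
  (∀ θ, 0 < det2 (deriv p θ) (deriv (deriv p) θ))

/-- `u` is a solution of the cycloid equation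
`(1/[p,p'])·(u'/[q,q'])' = −λ·u` for the normed plane with unit circle `p`. -/
def IsCycloidSol (p : ℝ → ℝ × ℝ) (lam : ℝ) (u : ℝ → ℝ) : Prop :=
  ContDiff ℝ 2 u ∧
  ∀ θ, (det2 (p θ) (deriv p θ))⁻¹ *
      deriv (fun t => deriv u t / det2 (dualQ p t) (deriv (dualQ p) t)) θ = -lam * u θ


theorem ode_local (F : ℝ → ℝ → ℝ) (K L : NNReal) (hK : ∀ t, LipschitzWith K (F t))
    (hc : ∀ x, Continuous fun t => F t x) (hL : ∀ t x, |F t x| ≤ L) (x0 : ℝ) (n : ℕ) :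
    ∃ φ : ℝ → ℝ, φ 0 = x0 ∧ ∀ t ∈ Set.Ioo (-(n+1:ℝ)) (n+1), HasDerivAt φ (F t (φ t)) t := by
  have hn : (0:ℝ) ≤ n := n.cast_nonneg
  have h : IsPicardLindelof F (tmin := -(n+1:ℝ)) (tmax := n+1) ⟨0, by constructor <;> linarith⟩ x0
      (L * (n+1)) 0 L K := by
    refine ⟨fun t _ => (hK t).lipschitzOnWith, fun x _ => (hc x).continuousOn, fun t _ x _ => ?_, ?_⟩
    · simpa using hL t x
    · simp
  obtain ⟨φ, h0, h1⟩ := h.exists_eq_forall_mem_Icc_hasDerivWithinAt₀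
  exact ⟨φ, h0, fun t ht => (h1 t (Set.Ioo_subset_Icc_self ht)).hasDerivAt (Icc_mem_nhds ht.1 ht.2)⟩

theorem ode_global (F : ℝ → ℝ → ℝ) (K L : NNReal) (hK : ∀ t, LipschitzWith K (F t))
    (hc : ∀ x, Continuous fun t => F t x) (hL : ∀ t x, |F t x| ≤ L) (x0 : ℝ) :
    ∃ φ : ℝ → ℝ, φ 0 = x0 ∧ ∀ t, HasDerivAt φ (F t (φ t)) t := by
  choose f hf0 hf using ode_local F K L hK hc hL x0
  have key : ∀ m n : ℕ, m ≤ n → Set.EqOn (f m) (f n) (Set.Ioo (-(m+1:ℝ)) (m+1)) := by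
    intro m n hmn
    have hm : (0:ℝ) ≤ m := m.cast_nonneg
    have hmn' : (m:ℝ) ≤ n := by exact_mod_cast hmn
    refine ODE_solution_unique_of_mem_Ioo (v := F) (K := K) (s := fun _ => Set.univ) (t₀ := 0)
      (fun t _ => (hK t).lipschitzOnWith) ⟨by linarith, by linarith⟩
      (fun t ht => ⟨hf m t ht, trivial⟩) (fun t ht => ⟨hf n t ⟨?_, ?_⟩, trivial⟩) ?_
    · linarith [ht.1]
    · linarith [ht.2]
    · rw [hf0, hf0]
  have key2 : ∀ (n : ℕ) t, t ∈ Set.Ioo (-(n+1:ℝ)) (n+1) → f (⌊|t|⌋₊) t = f n t := by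
    intro n t ht
    have h1 : ⌊|t|⌋₊ ≤ n := by
      have : |t| < n + 1 := abs_lt.2 ht
      have := (Nat.floor_lt (abs_nonneg t)).2 (by exact_mod_cast this : |t| < ((n+1:ℕ):ℝ))
      omega
    exact key _ _ h1 (abs_lt.1 (Nat.lt_floor_add_one |t|))
  refine ⟨fun t => f (⌊|t|⌋₊) t, by simp [hf0], fun t => ?_⟩
  have ht := abs_lt.1 (Nat.lt_floor_add_one |t|)
  refine (hf _ t ht).congr_of_eventuallyEq ?_
  filter_upwards [Ioo_mem_nhds ht.1 ht.2] with s hs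
  exact key2 _ s hs

def prF (a b : ℝ → ℝ) (lam t x : ℝ) : ℝ := b t * sin x ^ 2 + lam * a t * cos x ^ 2

theorem prF_lip (a b : ℝ → ℝ) (C : NNReal) (ha : ∀ t, 0 < a t ∧ a t ≤ C) (hb : ∀ t, 0 < b t ∧ b t ≤ C)
    (lam : ℝ) (h0 : 0 ≤ lam) (h1 : lam ≤ 1) (t : ℝ) : LipschitzWith (2 * C) (prF a b lam t) := by
  have hd : ∀ x, HasDerivAt (prF a b lam t) ((b t - lam * a t) * (2 * sin x * cos x)) x := by
    intro x
    have := (((hasDerivAt_sin x).pow 2).const_mul (b t)).add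
      (((hasDerivAt_cos x).pow 2).const_mul (lam * a t))
    refine this.congr_deriv ?_
    simp; ring
  apply lipschitzWith_of_nnnorm_deriv_le (fun x => (hd x).differentiableAt)
  intro x
  rw [(hd x).deriv, ← NNReal.coe_le_coe]
  simp only [coe_nnnorm, norm_mul, Real.norm_eq_abs, NNReal.coe_mul, NNReal.coe_ofNat]
  have e1 : |b t - lam * a t| ≤ C := by
    have := ha t; have := hb t
    rw [abs_le]; constructor <;> nlinarith [mul_nonneg h0 (ha t).1.le, mul_le_mul_of_nonneg_right h1 (ha t).1.le]
  have e2 : |sin x| * |cos x| ≤ 1 := by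
    nlinarith [abs_sin_le_one x, abs_cos_le_one x, abs_nonneg (sin x), abs_nonneg (cos x)]
  have : |(2:ℝ)| = 2 := by norm_num
  rw [this]
  calc _ = |b t - lam * a t| * (2 * (|sin x| * |cos x|)) := by ring
    _ ≤ C * (2 * 1) := by gcongr
    _ = _ := by ring

theorem prF_bd (a b : ℝ → ℝ) (C : NNReal) (ha : ∀ t, 0 < a t ∧ a t ≤ C) (hb : ∀ t, 0 < b t ∧ b t ≤ C)
    (lam : ℝ) (h0 : 0 ≤ lam) (h1 : lam ≤ 1) (t x : ℝ) : |prF a b lam t x| ≤ (2 * C : NNReal) := by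
  have e0 : 0 ≤ prF a b lam t x := by
    have := (ha t).1; have := (hb t).1
    unfold prF; positivity
  rw [abs_of_nonneg e0, prF]
  have e1 : b t * sin x ^ 2 ≤ C * 1 := by
    have := hb t
    gcongr
    · exact this.2
    · exact sin_sq_le_one x
  have e2 : lam * a t * cos x ^ 2 ≤ 1 * C * 1 := by
    have := ha t
    have h3 := this.1
    gcongr
    · exact this.2
    · exact cos_sq_le_one x
  push_cast; linarith

theorem prF_exists (a b : ℝ → ℝ) (hac : Continuous a) (hbc : Continuous b)
    (C : NNReal) (ha : ∀ t, 0 < a t ∧ a t ≤ C) (hb : ∀ t, 0 < b t ∧ b t ≤ C)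
    (lam : ℝ) (h0 : 0 ≤ lam) (h1 : lam ≤ 1) (x0 : ℝ) :
    ∃ φ : ℝ → ℝ, φ 0 = x0 ∧ ∀ t, HasDerivAt φ (prF a b lam t (φ t)) t :=
  ode_global _ _ _ (prF_lip a b C ha hb lam h0 h1) (fun x => by unfold prF; fun_prop)
    (prF_bd a b C ha hb lam h0 h1) x0

theorem prF_dep (a b : ℝ → ℝ) 
    (C : NNReal) (ha : ∀ t, 0 < a t ∧ a t ≤ C) (hb : ∀ t, 0 < b t ∧ b t ≤ C)
    (lam mu : ℝ) (h0 : 0 ≤ lam) (h1 : lam ≤ 1) (φ ψ : ℝ → ℝ) (h00 : φ 0 = ψ 0)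
    (hφ : ∀ t, HasDerivAt φ (prF a b lam t (φ t)) t)
    (hψ : ∀ t, HasDerivAt ψ (prF a b mu t (ψ t)) t) (T : ℝ) (hT : 0 ≤ T) :
    dist (φ T) (ψ T) ≤ gronwallBound 0 (2 * C : NNReal) (|mu - lam| * C) T := by
  have := dist_le_of_approx_trajectories_ODE (v := prF a b lam) (K := 2 * C) (f := φ) (g := ψ)
    (f' := fun t => prF a b lam t (φ t)) (g' := fun t => prF a b mu t (ψ t)) (a := 0) (b := T)
    (εf := 0) (εg := |mu - lam| * C) (δ := 0) (prF_lip a b C ha hb lam h0 h1)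
    (fun t _ => (hφ t).continuousAt.continuousWithinAt) (fun t _ => (hφ t).hasDerivWithinAt)
    (fun t _ => by simp)
    (fun t _ => (hψ t).continuousAt.continuousWithinAt) (fun t _ => (hψ t).hasDerivWithinAt)
    (fun t _ => ?_) (by simp [h00]) T ⟨hT, le_rfl⟩
  · simpa using this
  · rw [Real.dist_eq]
    have : prF a b mu t (ψ t) - prF a b lam t (ψ t) = (mu - lam) * (a t * cos (ψ t) ^ 2) := by
      unfold prF; ring
    rw [this, abs_mul]
    have h3 := (ha t).1
    rw [abs_of_nonneg (a := a t * cos (ψ t) ^ 2) (by positivity)]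
    gcongr
    calc a t * cos (ψ t) ^ 2 ≤ C * 1 := by
          gcongr
          · exact (ha t).2
          · exact cos_sq_le_one _
      _ = C := by ring

theorem gap_of_sin_ne (g : ℝ → ℝ) (hg : Continuous g) (h : ∀ t, sin (g t) ≠ 0) (x y : ℝ) :
    g y - g x < π := by
  by_contra hc
  push Not at hc
  have hpi := Real.pi_pos
  have h1 : g x ≤ (⌈g x / π⌉ : ℝ) * π := by
    have := Int.le_ceil (g x / π)
    rwa [div_le_iff₀ hpi] at this
  have h2 : (⌈g x / π⌉ : ℝ) * π ≤ g y := by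
    have := (Int.ceil_lt_add_one (g x / π)).le
    have := mul_le_mul_of_nonneg_right this hpi.le
    rw [add_mul, div_mul_cancel₀ _ hpi.ne'] at this
    linarith
  obtain ⟨t, ht⟩ := mem_range_of_exists_le_of_exists_ge hg ⟨x, h1⟩ ⟨y, h2⟩
  exact h t (by rw [ht]; exact sin_int_mul_pi _)

theorem const_of_sin_eq (g : ℝ → ℝ) (hg : Continuous g) (h : ∀ t, sin (g t) = 0) (x y : ℝ) :
    g y = g x := by
  have h' : ∀ x y, g y - g x < π := by
    intro x y
    have := gap_of_sin_ne (fun t => g t + π / 2) (by fun_prop) (fun t => by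
      rw [sin_add_pi_div_two]
      intro hc
      have := sin_sq_add_cos_sq (g t)
      rw [h t, hc] at this; norm_num at this) x y
    linarith
  obtain ⟨m, hm⟩ := sin_eq_zero_iff.1 (h x)
  obtain ⟨n, hn⟩ := sin_eq_zero_iff.1 (h y)
  have h1 := h' x y
  have h2 := h' y x
  rw [← hm, ← hn] at *
  have hpi := Real.pi_pos
  have e1 : ((n - m : ℤ) : ℝ) < 1 := by push_cast; nlinarith
  have e2 : ((m - n : ℤ) : ℝ) < 1 := by push_cast; nlinarith
  have e1' : n - m < 1 := by exact_mod_cast e1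
  have e2' : m - n < 1 := by exact_mod_cast e2
  have : n = m := by omega
  rw [this]

def Sol (a b : ℝ → ℝ) (lam : ℝ) (u v : ℝ → ℝ) : Prop :=
  ∀ t, HasDerivAt u (b t * v t) t ∧ HasDerivAt v (-(lam * a t * u t)) t

theorem Sol.wr {a b : ℝ → ℝ} {lam : ℝ} {u v x y : ℝ → ℝ} (h : Sol a b lam u v)
    (h' : Sol a b lam x y) (s t : ℝ) : u s * y s - v s * x s = u t * y t - v t * x t := by
  have hd : ∀ t, HasDerivAt (fun t => u t * y t - v t * x t) 0 t := by
    intro t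
    refine (((h t).1.mul (h' t).2).sub ((h t).2.mul (h' t).1)).congr_deriv ?_
    ring
  exact is_const_of_deriv_eq_zero (fun t => (hd t).differentiableAt) (fun t => (hd t).deriv) s t

theorem Sol.shift {a b : ℝ → ℝ} {lam : ℝ} {u v : ℝ → ℝ} (h : Sol a b lam u v) (c : ℝ)
    (ha : ∀ t, a (t + c) = a t) (hb : ∀ t, b (t + c) = b t) :
    Sol a b lam (fun t => u (t + c)) (fun t => v (t + c)) := by
  intro t
  have h1 := (h (t + c)).1.comp_add_const t c
  have h2 := (h (t + c)).2.comp_add_const t c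
  rw [hb] at h1
  rw [ha] at h2
  exact ⟨h1, h2⟩

theorem pr_sol {a b : ℝ → ℝ} {lam : ℝ} (hac : Continuous a) (hbc : Continuous b) {φ : ℝ → ℝ}
    (hφ : ∀ t, HasDerivAt φ (prF a b lam t (φ t)) t) :
    ∃ r : ℝ → ℝ, (∀ t, 0 < r t) ∧
      Sol a b lam (fun t => r t * cos (φ t)) (fun t => -(r t * sin (φ t))) := by
  have hφc : Continuous φ := continuous_iff_continuousAt.2 fun t => (hφ t).continuousAt
  let g : ℝ → ℝ := fun t => (lam * a t - b t) * (sin (φ t) * cos (φ t))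
  have hg : Continuous g := by fun_prop
  let G : ℝ → ℝ := fun t => ∫ s in (0:ℝ)..t, g s
  have hG : ∀ t, HasDerivAt G (g t) t := fun t =>
    intervalIntegral.integral_hasDerivAt_right (hg.intervalIntegrable _ _)
      (hg.stronglyMeasurableAtFilter _ _) hg.continuousAt
  refine ⟨fun t => exp (G t), fun t => exp_pos _, fun t => ⟨?_, ?_⟩⟩
  · refine ((hG t).exp.mul (hφ t).cos).congr_deriv ?_
    have := sin_sq_add_cos_sq (φ t)
    simp only [g, prF]
    linear_combination (-b t * exp (G t) * sin (φ t)) * this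
  · refine ((hG t).exp.mul (hφ t).sin).neg.congr_deriv ?_
    have := sin_sq_add_cos_sq (φ t)
    simp only [g, prF]
    linear_combination (-lam * a t * exp (G t) * cos (φ t)) * this

theorem angle_dich {a b : ℝ → ℝ} {lam : ℝ} (hac : Continuous a) (hbc : Continuous b) {φ ψ : ℝ → ℝ}
    (hφ : ∀ t, HasDerivAt φ (prF a b lam t (φ t)) t)
    (hψ : ∀ t, HasDerivAt ψ (prF a b lam t (ψ t)) t) :
    (∀ t, sin (φ t - ψ t) = 0) ∨ (∀ t, sin (φ t - ψ t) ≠ 0) := by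
  obtain ⟨r, hr, hs⟩ := pr_sol hac hbc hφ
  obtain ⟨r', hr', hs'⟩ := pr_sol hac hbc hψ
  have e : ∀ t, r t * r' t * sin (φ t - ψ t) = r 0 * r' 0 * sin (φ 0 - ψ 0) := by
    intro t
    have := hs.wr hs' t 0
    simp only [sin_sub]
    linear_combination this
  by_cases h : sin (φ 0 - ψ 0) = 0
  · left; intro t
    have := e t
    rw [h, mul_zero] at this
    exact (mul_eq_zero.1 this).resolve_left (mul_pos (hr t) (hr' t)).ne'
  · right; intro t ht
    have := e t
    rw [ht, mul_zero] at this
    exact mul_ne_zero (mul_pos (hr 0) (hr' 0)).ne' h this.symm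

theorem angle_gap {a b : ℝ → ℝ} {lam : ℝ} (hac : Continuous a) (hbc : Continuous b) {φ ψ : ℝ → ℝ}
    (hφ : ∀ t, HasDerivAt φ (prF a b lam t (φ t)) t)
    (hψ : ∀ t, HasDerivAt ψ (prF a b lam t (ψ t)) t) (x y : ℝ) :
    (φ y - ψ y) - (φ x - ψ x) < π := by
  have hφc : Continuous φ := continuous_iff_continuousAt.2 fun t => (hφ t).continuousAt
  have hψc : Continuous ψ := continuous_iff_continuousAt.2 fun t => (hψ t).continuousAt
  rcases angle_dich hac hbc hφ hψ with h | h
  · have := const_of_sin_eq (fun t => φ t - ψ t) (by fun_prop) h x y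
    rw [this]; simpa using Real.pi_pos
  · exact gap_of_sin_ne (fun t => φ t - ψ t) (by fun_prop) h x y

theorem angle_steps (φ : ℝ → ℝ) (hφc : Continuous φ) (h : ∀ t, sin (φ (t + π) - φ t) = 0) :
    ∃ m : ℤ, ∀ n : ℕ, φ (n * π) = φ 0 + n * (m * π) := by
  obtain ⟨m, hm⟩ := sin_eq_zero_iff.1 (h 0)
  refine ⟨m, fun n => ?_⟩
  induction n with
  | zero => simp
  | succ n ih =>
    have := const_of_sin_eq (fun t => φ (t + π) - φ t) (by fun_prop) h 0 (n * π)
    simp only [← hm] at this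
    have e : ((n + 1 : ℕ) : ℝ) * π = n * π + π := by push_cast; ring
    rw [e]; push_cast; linarith

theorem count_zeros (ψ : ℝ → ℝ) (hc : Continuous ψ) (hm : StrictMono ψ) (T : ℝ) (l : ℕ)
    (hT : ψ T = ψ 0 + 2 * π * l) :
    {t ∈ Set.Ico (0:ℝ) T | cos (ψ t) = 0}.ncard = 2 * l := by
  have hpi := Real.pi_pos
  set c : ℤ := ⌈(ψ 0 - π / 2) / π⌉ with hcdef
  let f : ℤ → ℝ := fun k => (2 * k + 1) * π / 2
  have hf : Function.Injective f := by
    intro x y hxy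
    simp only [f] at hxy
    have : (x:ℝ) = y := by
      have h2 : (2 * (x:ℝ) + 1) * π = (2 * y + 1) * π := by linarith
      have := mul_right_cancel₀ hpi.ne' h2
      linarith
    exact_mod_cast this
  have himg : ψ '' {t ∈ Set.Ico (0:ℝ) T | cos (ψ t) = 0} = f '' (Set.Ico c (c + 2 * l)) := by
    have hk : ∀ k : ℤ, k ∈ Set.Ico c (c + 2 * l) ↔ ψ 0 ≤ f k ∧ f k < ψ T := by
      intro k
      have e1 : c ≤ k ↔ ψ 0 ≤ f k := by
        rw [hcdef, Int.ceil_le, div_le_iff₀ hpi]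
        simp only [f]
        constructor <;> intro h <;> linarith
      have e2 : k < c + 2 * l ↔ f k < ψ T := by
        have : k < c + 2 * l ↔ k - 2 * l < c := by omega
        rw [this, hcdef, Int.lt_ceil, lt_div_iff₀ hpi, hT]
        simp only [f]
        push_cast
        constructor <;> intro h <;> linarith
      rw [Set.mem_Ico, e1, e2]
    ext y
    constructor
    · rintro ⟨t, ⟨⟨h0, h1⟩, h2⟩, rfl⟩
      obtain ⟨k, hk'⟩ := cos_eq_zero_iff.1 h2
      refine ⟨k, (hk k).2 ?_, hk'.symm⟩
      simp only [f, ← hk']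
      exact ⟨hm.monotone h0, hm h1⟩
    · rintro ⟨k, hk', rfl⟩
      obtain ⟨h0, h1⟩ := (hk k).1 hk'
      obtain ⟨t, ht⟩ := mem_range_of_exists_le_of_exists_ge hc ⟨0, h0⟩ ⟨T, h1.le⟩
      rw [← ht] at h0 h1
      exact ⟨t, ⟨⟨hm.le_iff_le.1 h0, hm.lt_iff_lt.1 h1⟩, cos_eq_zero_iff.2 ⟨k, ht⟩⟩, ht⟩
  rw [← Set.ncard_image_of_injective _ hm.injective, himg, Set.ncard_image_of_injective _ hf,
    ← Finset.coe_Ico, Set.ncard_coe_finset, Int.card_Ico]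
  omega

theorem pr_mono {a b : ℝ → ℝ} {lam : ℝ} (hlam : 0 < lam) (ha : ∀ t, 0 < a t) (hb : ∀ t, 0 < b t)
    {φ : ℝ → ℝ} (hφ : ∀ t, HasDerivAt φ (prF a b lam t (φ t)) t) : StrictMono φ := by
  apply strictMono_of_deriv_pos
  intro t
  rw [(hφ t).deriv, prF]
  have h1 := ha t
  have h2 := hb t
  by_cases hs : sin (φ t) = 0
  · have hc : cos (φ t) ^ 2 = 1 := by nlinarith [sin_sq_add_cos_sq (φ t)]
    rw [hs, hc]; simp; positivity
  · have : 0 < b t * sin (φ t) ^ 2 := by positivity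
    have : 0 ≤ lam * a t * cos (φ t) ^ 2 := by positivity
    linarith

theorem core_lam (a b : ℝ → ℝ) (hac : Continuous a) (hbc : Continuous b)
    (hap : ∀ t, a (t + π) = a t) (hbp : ∀ t, b (t + π) = b t)
    (C : NNReal) (ha : ∀ t, 0 < a t ∧ a t ≤ C) (hb : ∀ t, 0 < b t ∧ b t ≤ C)
    (N l : ℕ) (hl : 1 ≤ l) (hlN : l < N) (lam : ℝ) (h0 : 0 < lam) (h1 : lam ≤ 1)
    (φ : ℝ → ℝ) (hφ : ∀ t, HasDerivAt φ (prF a b lam t (φ t)) t) (hφ0 : φ 0 = 0)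
    (hφT : φ (2 * π * N) = 2 * π * l) (u v : ℝ → ℝ) (huv : Sol a b lam u v) :
    (∀ t, u (t + 2 * π * N) = u t) ∧
    (u ≠ 0 → {t ∈ Set.Ico (0:ℝ) (2 * π * N) | u t = 0}.ncard = 2 * l) := by
  have hpi := Real.pi_pos
  set T := 2 * π * (N:ℝ) with hTdef
  have hapT : ∀ t, a (t + T) = a t := by
    intro t
    have := Function.Periodic.nat_mul (f := a) (c := π) hap (2 * N) t
    rw [← this]; congr 2; push_cast; ring
  have hbpT : ∀ t, b (t + T) = b t := by
    intro t
    have := Function.Periodic.nat_mul (f := b) (c := π) hbp (2 * N) t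
    rw [← this]; congr 2; push_cast; ring
  have hφc : Continuous φ := continuous_iff_continuousAt.2 fun t => (hφ t).continuousAt
  obtain ⟨r, hr, hX⟩ := pr_sol hac hbc hφ
  set x1 : ℝ → ℝ := fun t => r t * cos (φ t) with hx1
  set x2 : ℝ → ℝ := fun t => -(r t * sin (φ t)) with hx2
  have hY := hX.shift π hap hbp
  have hXT := hX.shift T hapT hbpT
  obtain ⟨w, hw⟩ : ∃ w, ∀ t, x1 t * x2 (t + π) - x2 t * x1 (t + π) = w :=
    ⟨_, fun t => hX.wr hY t 0⟩
  have hw0 : w ≠ 0 := by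
    intro hw0
    obtain ⟨m, hm⟩ := angle_steps φ hφc (fun t => by
      have := hw t
      rw [hw0] at this
      have e : r t * r (t + π) * sin (φ (t + π) - φ t) = 0 := by
        simp only [sin_sub, hx1, hx2] at *
        linear_combination -this
      exact (mul_eq_zero.1 e).resolve_left (mul_pos (hr _) (hr _)).ne')
    have h2 := hm (2 * N)
    have h3 : ((2 * N : ℕ) : ℝ) * π = T := by push_cast; rw [hTdef]; ring
    rw [h3, hφT, hφ0] at h2
    push_cast at h2
    have h4 : (l : ℝ) = N * m := by
      have : (2 * π) * (l:ℝ) = (2 * π) * (N * m) := by linarith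
      exact mul_left_cancel₀ (by positivity) this
    have h5 : (l : ℤ) = N * m := by exact_mod_cast h4
    have h6 : (l : ℤ) < N := by exact_mod_cast hlN
    have h7 : (1 : ℤ) ≤ l := by exact_mod_cast hl
    have h8 : 0 < m := by nlinarith
    nlinarith
  -- X shifted by T is a multiple of X
  have hx1T : x1 T = r T := by
    simp only [hx1, hφT]
    rw [show 2 * π * (l:ℝ) = l * (2 * π) by ring, cos_nat_mul_two_pi, mul_one]
  have hx2T : x2 T = 0 := by
    simp only [hx2, hφT]
    rw [show 2 * π * (l:ℝ) = (2 * l : ℕ) * π by push_cast; ring, sin_nat_mul_pi]; simp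
  have hx10 : x1 0 = r 0 := by simp [hx1, hφ0]
  have hx20 : x2 0 = 0 := by simp [hx2, hφ0]
  obtain ⟨k, hk⟩ : ∃ k, ∀ t, x1 (t + T) * x2 (t + π) - x2 (t + T) * x1 (t + π) = k :=
    ⟨_, fun t => hXT.wr hY t 0⟩
  have hz : ∀ t, x1 t * x2 (t + T) - x2 t * x1 (t + T) = 0 := by
    intro t
    have := hX.wr hXT t 0
    rw [this]; simp [hx2T, hx20]
  obtain ⟨c, hc⟩ : ∃ c, k = c * w := ⟨k / w, by field_simp⟩
  have hT1 : ∀ t, x1 (t + T) = c * x1 t := by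
    intro t
    apply mul_left_cancel₀ hw0
    have h1 := hw t; have h2 := hk t; have h3 := hz t
    rw [hc] at h2
    linear_combination (-x1 (t + T)) * h1 + x1 t * h2 + x1 (t + π) * h3
  have hT2 : ∀ t, x2 (t + T) = c * x2 t := by
    intro t
    apply mul_left_cancel₀ hw0
    have h1 := hw t; have h2 := hk t; have h3 := hz t
    rw [hc] at h2
    linear_combination (-x2 (t + T)) * h1 + x2 t * h2 + x2 (t + π) * h3
  have hcpos : 0 < c := by
    have := hT1 0
    rw [zero_add, hx1T, hx10] at this
    by_contra hc'
    nlinarith [hr 0, hr T]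
  have hc1 : c = 1 := by
    have e1 := hw (0 + T)
    have e2 := hw 0
    rw [show (0 + T + π) = (0 + π) + T by ring, hT1, hT2, hT1, hT2] at e1
    have : c ^ 2 * w = 1 * w := by linear_combination e1 - c ^ 2 * e2
    have := mul_right_cancel₀ hw0 this
    nlinarith
  subst hc1
  simp only [one_mul] at hT1 hT2
  have hper : ∀ u v : ℝ → ℝ, Sol a b lam u v →
      ∃ α β : ℝ, ∀ t, w * u t = α * x1 t + β * x1 (t + π) ∧ w * v t = α * x2 t + β * x2 (t + π) := by
    intro u v huv
    refine ⟨u 0 * x2 (0 + π) - v 0 * x1 (0 + π), x1 0 * v 0 - x2 0 * u 0, fun t => ?_⟩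
    rw [huv.wr hY 0 t, hX.wr huv 0 t, ← hw t]
    constructor <;> ring
  have hperiodic : ∀ u v : ℝ → ℝ, Sol a b lam u v →
      ∀ t, u (t + T) = u t ∧ v (t + T) = v t := by
    intro u v huv t
    obtain ⟨α, β, h⟩ := hper u v huv
    constructor
    · apply mul_left_cancel₀ hw0
      rw [(h _).1, (h _).1, show t + T + π = (t + π) + T by ring, hT1, hT1]
    · apply mul_left_cancel₀ hw0
      rw [(h _).2, (h _).2, show t + T + π = (t + π) + T by ring, hT2, hT2]
  refine ⟨fun t => (hperiodic u v huv t).1, fun hne => ?_⟩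
  have hnv : ∀ t, u t = 0 → v t ≠ 0 := by
    intro t hu hv
    apply hne
    funext s
    apply mul_left_cancel₀ hw0
    have e1 := huv.wr hY s t
    have e2 := hX.wr huv s t
    have e3 := hw s
    rw [hu, hv] at e1 e2
    simp only [Pi.zero_apply]
    linear_combination (-u s) * e3 + x1 s * e1 + x1 (s + π) * e2
  obtain ⟨ρ, ψ0, hu0, hv0⟩ : ∃ ρ ψ0 : ℝ, u 0 = ρ * cos ψ0 ∧ v 0 = -(ρ * sin ψ0) := by
    refine ⟨‖(⟨u 0, -v 0⟩ : ℂ)‖, Complex.arg ⟨u 0, -v 0⟩, ?_, ?_⟩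
    · rw [Complex.norm_mul_cos_arg]
    · rw [Complex.norm_mul_sin_arg]; simp
  obtain ⟨ψ, hψ0, hψ⟩ := prF_exists a b hac hbc C ha hb lam h0.le h1 ψ0
  have hψc : Continuous ψ := continuous_iff_continuousAt.2 fun t => (hψ t).continuousAt
  obtain ⟨s, hs, hS⟩ := pr_sol hac hbc hψ
  have hpar : ∀ t, u t * sin (ψ t) + v t * cos (ψ t) = 0 := by
    intro t
    have := huv.wr hS t 0
    rw [hψ0, hu0, hv0] at this
    have : s t * (u t * sin (ψ t) + v t * cos (ψ t)) = 0 := by linear_combination -this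
    exact (mul_eq_zero.1 this).resolve_left (hs t).ne'
  have hzero : ∀ t, u t = 0 ↔ cos (ψ t) = 0 := by
    intro t
    constructor
    · intro hu
      have := hpar t
      rw [hu, zero_mul, zero_add] at this
      exact (mul_eq_zero.1 this).resolve_left (hnv t hu)
    · intro hcs
      have := hpar t
      rw [hcs, mul_zero, add_zero] at this
      refine (mul_eq_zero.1 this).resolve_right ?_
      intro hsn
      have := sin_sq_add_cos_sq (ψ t)
      rw [hsn, hcs] at this; norm_num at this
  have hmono := pr_mono h0 (fun t => (ha t).1) (fun t => (hb t).1) hψ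
  have hψT : ψ T = ψ 0 + 2 * π * l := by
    have hp := hperiodic _ _ hS 0
    simp only [zero_add] at hp
    have : s T * s 0 * sin (ψ T - ψ 0) = 0 := by
      rw [sin_sub]
      linear_combination (-s 0 * sin (ψ 0)) * hp.1 - (s 0 * cos (ψ 0)) * hp.2
    have := (mul_eq_zero.1 this).resolve_left (mul_pos (hs _) (hs _)).ne'
    obtain ⟨m, hm⟩ := sin_eq_zero_iff.1 this
    have g1 := angle_gap hac hbc hφ hψ 0 T
    have g2 := angle_gap hac hbc hψ hφ 0 T
    rw [hφT, hφ0] at g1 g2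
    have e1 : ((2 * l - m : ℤ) : ℝ) < 1 := by push_cast; nlinarith
    have e2 : ((m - 2 * l : ℤ) : ℝ) < 1 := by push_cast; nlinarith
    have e1' : 2 * (l:ℤ) - m < 1 := by exact_mod_cast e1
    have e2' : m - 2 * (l:ℤ) < 1 := by exact_mod_cast e2
    have : m = 2 * (l:ℤ) := by omega
    rw [this] at hm
    push_cast at hm
    linarith
  simp only [hzero]
  exact count_zeros ψ hψc hmono T l hψT

theorem core (a b : ℝ → ℝ) (hac : Continuous a) (hbc : Continuous b)
    (hap : ∀ t, a (t + π) = a t) (hbp : ∀ t, b (t + π) = b t)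
    (ha : ∀ t, 0 < a t) (hb : ∀ t, 0 < b t)
    (P1 P2 Q1 Q2 : ℝ → ℝ)
    (hP1 : ∀ t, HasDerivAt P1 (a t * Q1 t) t) (hP2 : ∀ t, HasDerivAt P2 (a t * Q2 t) t)
    (hQ1 : ∀ t, HasDerivAt Q1 (-(b t * P1 t)) t) (hQ2 : ∀ t, HasDerivAt Q2 (-(b t * P2 t)) t)
    (hPQ : ∀ t, P1 t * Q2 t - P2 t * Q1 t = 1)
    (aP1 : ∀ t, P1 (t + π) = -P1 t) (aP2 : ∀ t, P2 (t + π) = -P2 t)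
    (aQ1 : ∀ t, Q1 (t + π) = -Q1 t) (aQ2 : ∀ t, Q2 (t + π) = -Q2 t)
    (N l : ℕ) (hl : 1 ≤ l) (hlN : l < N) :
    ∃ lam : ℝ, 0 < lam ∧ lam < 1 ∧ ∀ u v, Sol a b lam u v → 
      (∀ t, u (t + 2 * π * N) = u t) ∧
      (u ≠ 0 → {t ∈ Set.Ico (0:ℝ) (2 * π * N) | u t = 0}.ncard = 2 * l) := by
  have hpi := Real.pi_pos
  obtain ⟨C, hC⟩ : ∃ C : NNReal, (∀ t, a t ≤ C) ∧ ∀ t, b t ≤ C := by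
    obtain ⟨A, hA⟩ := (Function.Periodic.isBounded_of_continuous (f := a) hap hpi.ne' hac).bddAbove
    obtain ⟨B, hB⟩ := (Function.Periodic.isBounded_of_continuous (f := b) hbp hpi.ne' hbc).bddAbove
    refine ⟨(max A B).toNNReal, fun t => ?_, fun t => ?_⟩
    · exact (hA ⟨t, rfl⟩).trans ((le_max_left _ _).trans (le_coe_toNNReal _))
    · exact (hB ⟨t, rfl⟩).trans ((le_max_right _ _).trans (le_coe_toNNReal _))
  have ha' : ∀ t, 0 < a t ∧ a t ≤ C := fun t => ⟨ha t, hC.1 t⟩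
  have hb' : ∀ t, 0 < b t ∧ b t ≤ C := fun t => ⟨hb t, hC.2 t⟩
  have hex : ∀ lam : ℝ, ∃ φ : ℝ → ℝ, lam ∈ Set.Icc (0:ℝ) 1 →
      φ 0 = 0 ∧ ∀ t, HasDerivAt φ (prF a b lam t (φ t)) t := by
    intro lam
    by_cases h : lam ∈ Set.Icc (0:ℝ) 1
    · obtain ⟨φ, hφ⟩ := prF_exists a b hac hbc C ha' hb' lam h.1 h.2 0
      exact ⟨φ, fun _ => hφ⟩
    · exact ⟨0, fun h' => absurd h' h⟩
  choose φ hφ using hex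
  have hT : 0 ≤ 2 * π * (N:ℝ) := by positivity
  have hcont : ContinuousOn (fun lam => φ lam (2 * π * N)) (Set.Icc 0 1) := by
    intro lam hlam
    rw [ContinuousWithinAt, tendsto_iff_dist_tendsto_zero]
    have hlim : Filter.Tendsto (fun mu => gronwallBound 0 (2 * C : NNReal) (|mu - lam| * C) (2 * π * N))
        (nhdsWithin lam (Set.Icc 0 1)) (nhds 0) := by
      have : Continuous fun mu : ℝ => gronwallBound 0 (2 * C : NNReal) (|mu - lam| * C) (2 * π * N) :=
        (gronwallBound_continuous_ε 0 _ _).comp (by fun_prop : Continuous fun mu : ℝ => |mu - lam| * C)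
      have h := (this.tendsto lam).mono_left (nhdsWithin_le_nhds (s := Set.Icc 0 1))
      simpa [gronwallBound_ε0_δ0] using h
    refine squeeze_zero' (Filter.Eventually.of_forall fun _ => dist_nonneg) ?_ hlim
    filter_upwards [self_mem_nhdsWithin] with mu hmu
    rw [dist_comm]
    exact prF_dep a b C ha' hb' lam mu hlam.1 hlam.2 (φ lam) (φ mu)
      (by rw [(hφ lam hlam).1, (hφ mu hmu).1]) (hφ lam hlam).2 (hφ mu hmu).2 _ hT
  have hl1 : (1:ℝ) ≤ l := by exact_mod_cast hl
  have hlN' : (l:ℝ) < N := by exact_mod_cast hlN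
  have hz : φ 0 (2 * π * N) = 0 := by
    have m0 : (0:ℝ) ∈ Set.Icc (0:ℝ) 1 := by simp
    have := prF_dep a b C ha' hb' 0 0 le_rfl zero_le_one (φ 0) (fun _ => 0)
      (by rw [(hφ 0 m0).1]) (hφ 0 m0).2
      (fun t => (hasDerivAt_const t (0:ℝ)).congr_deriv (by simp [prF])) _ hT
    simpa [gronwallBound_ε0_δ0] using this
  have hone : 2 * π * l < φ 1 (2 * π * N) := by
    have m1 : (1:ℝ) ∈ Set.Icc (0:ℝ) 1 := by simp
    obtain ⟨hφ0, hφ'⟩ := hφ 1 m1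
    have hφc : Continuous (φ 1) := continuous_iff_continuousAt.2 fun t => (hφ' t).continuousAt
    obtain ⟨r, hr, hX⟩ := pr_sol hac hbc hφ'
    have s1 : Sol a b 1 Q1 (fun t => -P1 t) := fun t =>
      ⟨(hQ1 t).congr_deriv (by ring), (hP1 t).neg.congr_deriv (by ring)⟩
    have s2 : Sol a b 1 Q2 (fun t => -P2 t) := fun t =>
      ⟨(hQ2 t).congr_deriv (by ring), (hP2 t).neg.congr_deriv (by ring)⟩
    have hsin : ∀ t, sin (φ 1 (t + π) - φ 1 t) = 0 := by
      intro t
      have e1 := hX.wr s1 (t + π) t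
      have e2 := hX.wr s2 (t + π) t
      simp only [aP1, aP2, aQ1, aQ2] at e1 e2
      have e3 := hPQ t
      have : r (t + π) * r t * sin (φ 1 (t + π) - φ 1 t) = 0 := by
        have f1 : r (t + π) * cos (φ 1 (t + π)) = -(r t * cos (φ 1 t)) := by
          linear_combination (Q2 t) * e1 - Q1 t * e2 - (r (t + π) * cos (φ 1 (t + π)) + r t * cos (φ 1 t)) * e3
        have f2 : r (t + π) * sin (φ 1 (t + π)) = -(r t * sin (φ 1 t)) := by
          linear_combination (P2 t) * e1 - P1 t * e2 - (r (t + π) * sin (φ 1 (t + π)) + r t * sin (φ 1 t)) * e3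
        rw [sin_sub]
        linear_combination (r t * cos (φ 1 t)) * f2 - r t * sin (φ 1 t) * f1
      exact (mul_eq_zero.1 this).resolve_left (mul_pos (hr _) (hr _)).ne'
    obtain ⟨m, hm⟩ := angle_steps _ hφc hsin
    have hmono := pr_mono one_pos ha hb hφ'
    have h1 := hm 1
    have h2 := hm (2 * N)
    have h3 := hmono hpi
    simp only [Nat.cast_one, one_mul] at h1
    rw [h1, hφ0] at h3
    have hm0 : (0:ℝ) < m := by
      by_contra hc
      nlinarith
    have hm1 : (1:ℝ) ≤ m := by
      have : 0 < m := by exact_mod_cast hm0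
      exact_mod_cast this
    rw [show ((2 * N : ℕ) : ℝ) * π = 2 * π * N by push_cast; ring, hφ0] at h2
    rw [h2]
    push_cast
    have : (N:ℝ) * 1 ≤ N * m := by gcongr
    nlinarith
  obtain ⟨lam, ⟨hm0, hm1⟩, hlam⟩ := intermediate_value_Ioo (zero_le_one) hcont
    (show 2 * π * (l:ℝ) ∈ _ from ⟨by simp only [hz]; positivity, hone⟩)
  have hmem : lam ∈ Set.Icc (0:ℝ) 1 := ⟨hm0.le, hm1.le⟩
  refine ⟨lam, hm0, hm1, fun u v huv => ?_⟩
  exact core_lam a b hac hbc hap hbp C ha' hb' N l hl hlN lam hm0 hm1.le (φ lam) (hφ lam hmem).2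
    (hφ lam hmem).1 hlam u v huv

theorem anti_deriv (p : ℝ → ℝ × ℝ) (hpp : ∀ θ, p (θ + π) = -p θ) (t : ℝ) :
    deriv p (t + π) = -deriv p t := by
  rw [← deriv_comp_add_const]
  have : (fun x => p (x + π)) = fun x => -p x := funext hpp
  rw [this, deriv.fun_neg]

theorem det2_neg (x y : ℝ × ℝ) : det2 (-x) (-y) = det2 x y := by
  simp [det2]

theorem bridge (p : ℝ → ℝ × ℝ) (hs : ContDiff ℝ (⊤ : ℕ∞) p) (hpp : ∀ θ, p (θ + π) = -p θ)
    (hpos : ∀ θ, 0 < det2 (p θ) (deriv p θ))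
    (hpos2 : ∀ θ, 0 < det2 (deriv p θ) (deriv (deriv p) θ)) (N l : ℕ) (hl : 1 ≤ l) (hlN : l < N) :
    ∃ lam : ℝ, 0 < lam ∧ lam < 1 ∧
      (∀ u : ℝ → ℝ, IsCycloidSol p lam u → ∀ θ, u (θ + 2 * π * N) = u θ) ∧
      (∀ u : ℝ → ℝ, IsCycloidSol p lam u → u ≠ 0 →
        {θ ∈ Set.Ico (0:ℝ) (2 * π * N) | u θ = 0}.ncard = 2 * l) := by
  have smooth_deriv : ∀ f : ℝ → ℝ × ℝ, ContDiff ℝ (⊤ : ℕ∞) f → ContDiff ℝ (⊤ : ℕ∞) (deriv f) :=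
    fun f hf => (contDiff_infty_iff_deriv.1 hf).2
  have smooth_det : ∀ f g : ℝ → ℝ × ℝ, ContDiff ℝ (⊤ : ℕ∞) f → ContDiff ℝ (⊤ : ℕ∞) g →
      ContDiff ℝ (⊤ : ℕ∞) (fun t => det2 (f t) (g t)) := by
    intro f g hf hg
    unfold det2
    exact (hf.fst.mul hg.snd).sub (hf.snd.mul hg.fst)
  have hdp := smooth_deriv p hs
  have hddp := smooth_deriv _ hdp
  have hone : (1 : WithTop ℕ∞) ≤ ((⊤ : ℕ∞) : WithTop ℕ∞) := by exact_mod_cast le_top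
  have hnz : ((⊤ : ℕ∞) : WithTop ℕ∞) ≠ 0 := by simp
  set a : ℝ → ℝ := fun t => det2 (p t) (deriv p t) with hadef
  have hapos : ∀ t, 0 < a t := hpos
  have has : ContDiff ℝ (⊤ : ℕ∞) a := smooth_det _ _ hs hdp
  have hainv : ContDiff ℝ (⊤ : ℕ∞) (fun t => (a t)⁻¹) := has.inv fun t => (hapos t).ne'
  set q : ℝ → ℝ × ℝ := dualQ p with hqdef
  have hq : ∀ t, q t = (a t)⁻¹ • deriv p t := fun t => rfl
  have hqs : ContDiff ℝ (⊤ : ℕ∞) q := hainv.smul hdp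
  have hdq := smooth_deriv q hqs
  set b : ℝ → ℝ := fun t => det2 (q t) (deriv q t) with hbdef
  have hbs : ContDiff ℝ (⊤ : ℕ∞) b := smooth_det _ _ hqs hdq
  have hbpos : ∀ t, 0 < b t := by
    intro t
    have h1 := (hainv.differentiable hnz t).hasDerivAt.smul (hdp.differentiable hnz t).hasDerivAt
    have h2 : deriv q t = _ := h1.deriv
    have h3 : b t = (a t)⁻¹ ^ 2 * det2 (deriv p t) (deriv (deriv p) t) := by
      simp only [hbdef, h2, hq t, det2, Prod.fst_add, Prod.snd_add, Prod.smul_fst, Prod.smul_snd,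
        smul_eq_mul]
      ring
    rw [h3]
    have := hpos2 t
    have := hapos t
    positivity
  have hda := anti_deriv p hpp
  have hap : ∀ t, a (t + π) = a t := by
    intro t
    simp only [hadef, hda, hpp, det2_neg]
  have hqp : ∀ t, q (t + π) = -q t := by
    intro t
    rw [hq, hq, hap, hda, smul_neg]
  have hdqa := anti_deriv q hqp
  have hbp : ∀ t, b (t + π) = b t := by
    intro t
    simp only [hbdef, hdqa, hqp, det2_neg]
  have hfst : ∀ (f : ℝ → ℝ × ℝ), ContDiff ℝ (⊤ : ℕ∞) f → ∀ t,
      HasDerivAt (fun t => (f t).1) (deriv f t).1 t := by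
    intro f hf t
    exact (ContinuousLinearMap.fst ℝ ℝ ℝ).hasFDerivAt.comp_hasDerivAt t
      (hf.differentiable hnz t).hasDerivAt
  have hsnd : ∀ (f : ℝ → ℝ × ℝ), ContDiff ℝ (⊤ : ℕ∞) f → ∀ t,
      HasDerivAt (fun t => (f t).2) (deriv f t).2 t := by
    intro f hf t
    exact (ContinuousLinearMap.snd ℝ ℝ ℝ).hasFDerivAt.comp_hasDerivAt t
      (hf.differentiable hnz t).hasDerivAt
  have hpq1 : ∀ t, (deriv p t).1 = a t * (q t).1 := by
    intro t
    rw [hq]; simp [(hapos t).ne']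
  have hpq2 : ∀ t, (deriv p t).2 = a t * (q t).2 := by
    intro t
    rw [hq]; simp [(hapos t).ne']
  have hdet : ∀ t, (p t).1 * (q t).2 - (p t).2 * (q t).1 = 1 := by
    intro t
    apply mul_left_cancel₀ (hapos t).ne'
    have : a t = (p t).1 * (deriv p t).2 - (p t).2 * (deriv p t).1 := rfl
    rw [hpq1, hpq2] at this
    linear_combination -this
  have hdet' : ∀ t, (p t).1 * (deriv q t).2 - (p t).2 * (deriv q t).1 = 0 := by
    intro t
    have h1 := ((hfst p hs t).mul (hsnd q hqs t)).sub ((hsnd p hs t).mul (hfst q hqs t))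
    have h2 : HasDerivAt (fun t => (p t).1 * (q t).2 - (p t).2 * (q t).1) 0 t := by
      simp only [hdet]; exact hasDerivAt_const _ _
    have h3 := h1.unique h2
    rw [hpq1, hpq2] at h3
    linear_combination h3
  have hq1 : ∀ t, (deriv q t).1 = -(b t * (p t).1) := by
    intro t
    have h1 := hdet t
    have h2 := hdet' t
    have : b t = (q t).1 * (deriv q t).2 - (q t).2 * (deriv q t).1 := rfl
    rw [this]
    linear_combination (-(deriv q t).1) * h1 + (q t).1 * h2
  have hq2 : ∀ t, (deriv q t).2 = -(b t * (p t).2) := by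
    intro t
    have h1 := hdet t
    have h2 := hdet' t
    have : b t = (q t).1 * (deriv q t).2 - (q t).2 * (deriv q t).1 := rfl
    rw [this]
    linear_combination (-(deriv q t).2) * h1 + (q t).2 * h2
  obtain ⟨lam, h0, h1, h⟩ := core a b has.continuous hbs.continuous hap hbp hapos hbpos
    (fun t => (p t).1) (fun t => (p t).2) (fun t => (q t).1) (fun t => (q t).2)
    (fun t => (hfst p hs t).congr_deriv (hpq1 t)) (fun t => (hsnd p hs t).congr_deriv (hpq2 t))
    (fun t => (hfst q hqs t).congr_deriv (hq1 t)) (fun t => (hsnd q hqs t).congr_deriv (hq2 t))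
    hdet (fun t => by simp [hpp]) (fun t => by simp [hpp]) (fun t => by simp [hqp])
    (fun t => by simp [hqp]) N l hl hlN
  have hsol : ∀ u, IsCycloidSol p lam u → Sol a b lam u (fun t => deriv u t / b t) := by
    intro u hu t
    have hu1 : ContDiff ℝ 1 (deriv u) :=
      (contDiff_succ_iff_deriv (n := 1).1 (by simpa [one_add_one_eq_two] using hu.1)).2.2
    have hb0 := (hbpos t).ne'
    have ha0 := (hapos t).ne'
    constructor
    · refine ((hu.1.differentiable (by norm_num)) t).hasDerivAt.congr_deriv ?_
      field_simp
    · have hdiff : DifferentiableAt ℝ (fun t => deriv u t / b t) t :=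
        ((hu1.differentiable (by norm_num)) t).div (hbs.differentiable hnz t) hb0
      refine hdiff.hasDerivAt.congr_deriv ?_
      have e : (a t)⁻¹ * deriv (fun t => deriv u t / b t) t = -lam * u t := hu.2 t
      field_simp at e
      linear_combination e
  exact ⟨lam, h0, h1, fun u hu => (h u _ (hsol u hu)).1, fun u hu => (h u _ (hsol u hu)).2⟩

/-- for every `N > 1` and `1 ≤ l ≤ N-1` there is `λ ∈ (0,1)` such
that every solution of the cycloid equation with parameter `λ` is `2πN`-periodic,
and every nonzero solution has exactly `2l` distinct zeros in `[0, 2πN)`: these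
are the epicycloids closing after `N` turns with `2l` cusps. -/
theorem stmt_16 (p : ℝ → ℝ × ℝ) (hP : IsUnitCircle p)
    (N : ℕ) (hN : 1 < N) (l : ℕ) (hl : 1 ≤ l) (hlN : l ≤ N - 1) :
    ∃ lam : ℝ, 0 < lam ∧ lam < 1 ∧
      (∀ u : ℝ → ℝ, IsCycloidSol p lam u → ∀ θ, u (θ + 2 * π * N) = u θ) ∧
      (∀ u : ℝ → ℝ, IsCycloidSol p lam u → u ≠ 0 →
        {θ ∈ Set.Ico (0:ℝ) (2 * π * N) | u θ = 0}.ncard = 2 * l) := by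
  obtain ⟨hs, hpp, hpos, hpos2⟩ := hP
  exact bridge p hs hpp hpos hpos2 N l hl (by omega)
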